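/- There is an absolute constant C ≥ 1 such that for all positive integers m and n and every m-homogeneous polynomial P(z) = ∑_{|α|=m} a_α z^α on ℂ^n, one has (∑_{|α|=m} |a_α|^{2m/(m+1)})^{(m+1)/(2m)} ≤ C^m · sup_{z ∈ 𝔻^n} |∑_{|α|=m} a_α z^α|. (Hypercontractive Bohnenblust–Hille inequality for polynomials.) -/

import Mathlib

open Finset

/-- Evaluation of the `m`-homogeneous polynomial on `ℂ^n` with coefficient family `a`
(indexed by the multi-indices `α` with `|α| = m`) at the point `z`. -/
noncomputable def mhEval (n m : ℕ) (a : (Fin n → ℕ) → ℂ) (z : Fin n → ℂ) : ℂ :=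
  ∑ α ∈ Finset.Nat.antidiagonalTuple n m, a α * ∏ i, z i ^ α i

/-- The supremum of `|P(z)|` over the open unit polydisc `𝔻^n`. -/
noncomputable def polydiscSup (n m : ℕ) (a : (Fin n → ℕ) → ℂ) : ℝ :=
  sSup {x : ℝ | ∃ z : Fin n → ℂ, (∀ i, ‖z i‖ < 1) ∧ x = ‖mhEval n m a z‖}

/-!
Weighted AM–GM with weights governed by `A j = √(∑ α, α j * |a α| ^ 2)` bounds the `ℓ^{2m/(m+1)}`
norm of the coefficients of `P` by `∑ j, A j`. Up to `α j ≤ (α j) ^ 2`, `A j` is the `L²` norm of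
`z_j ∂_j P` on the torus. A monomial of degree `2m` is a product of two monomials in at most
`2 ^ (2m)` ways, so fourth moments are controlled by second moments and Hölder's inequality gives
`‖·‖_{L²} ≤ 2 ^ m ‖·‖_{L¹}` in degree `m`. Finally, for `|z_i| = 1` and suitable unimodular `u_i`,
`∑ j, |z_j ∂_j P(z)|` is the derivative at `0` of `ζ ↦ P(z_i (1 + ζ u_i))`, which Cauchy's estimate
on the unit disc bounds by the supremum of `|P|` on the polydisc of radius `2`.
-/

section

open MvPolynomial
open scoped BigOperators ComplexConjugate

section AMGM

variable {σ : Type*} [Fintype σ]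

theorem rpow_le_weighted_sum_add_prod {α : σ → ℕ} {A : σ → ℝ} {c : ℝ} (hA : ∀ j, 0 ≤ A j)
    (hαA : ∀ j, α j ≠ 0 → A j ≠ 0) (hc : 0 ≤ c) {m : ℕ} (hα : ∑ j, α j = m) :
    c ^ ((2 * m : ℝ) / (m + 1)) ≤
      (∑ j, α j * (c ^ 2 / A j) + ∏ j, A j ^ α j) / (m + 1) := by
  have hsum : ∑ j, (α j : ℝ) = m := mod_cast hα
  have hcancel (j : σ) : A j ^ α j * (c ^ 2 / A j) ^ α j = (c ^ 2) ^ α j := by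
    by_cases hj : α j = 0
    · simp [hj]
    · rw [← mul_pow, mul_div_cancel₀ _ (hαA j hj)]
  have hprod : (∏ j, A j ^ α j) * ∏ j, (c ^ 2 / A j) ^ α j = c ^ (2 * m) := by
    simp_rw [← prod_mul_distrib, hcancel, prod_pow_eq_pow_sum, hα, pow_mul]
  -- Weights `1` for `∏ j, A j ^ α j` and `α j` for `c ^ 2 / A j`: in the geometric mean the `A j`
  -- cancel.
  have amgm := Real.geom_mean_le_arith_mean (univ : Finset (Option σ))
    (fun o => o.elim 1 fun j => (α j : ℝ)) (fun o => o.elim (∏ j, A j ^ α j) fun j => c ^ 2 / A j)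
    (by rintro (_ | j) _ <;> simp)
    (by simp only [Fintype.sum_option, Option.elim]; positivity)
    (by
      rintro (_ | j) _
      · exact prod_nonneg fun j _ => pow_nonneg (hA j) _
      · exact div_nonneg (sq_nonneg c) (hA j))
  simp only [Fintype.sum_option, Fintype.prod_option, Option.elim, Real.rpow_one,
    Real.rpow_natCast, one_mul, hsum, hprod] at amgm
  rw [← Real.rpow_natCast_mul hc, ← div_eq_mul_inv] at amgm
  simpa [add_comm] using amgm

theorem sum_prod_pow_le_sum_pow {A : σ → ℝ} (hA : ∀ j, 0 ≤ A j) {T : Finset (σ →₀ ℕ)} {m : ℕ}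
    (hT : ∀ α ∈ T, α.degree = m) : ∑ α ∈ T, ∏ j, A j ^ α j ≤ (∑ j, A j) ^ m := by
  classical
  have hprod (α : σ → ℕ) : 0 ≤ ∏ j, A j ^ α j := prod_nonneg fun j _ => pow_nonneg (hA j) _
  calc ∑ α ∈ T, ∏ j, A j ^ α j
      = ∑ α ∈ T.map ⟨_, DFunLike.coe_injective⟩, ∏ j, A j ^ α j := by
        rw [sum_map]; rfl
    _ ≤ ∑ α ∈ univ.piAntidiag m, ∏ j, A j ^ α j := by
        refine sum_le_sum_of_subset_of_nonneg ?_ fun α _ _ => hprod α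
        intro α hα
        obtain ⟨β, hβ, rfl⟩ := mem_map.mp hα
        simpa [Finsupp.degree_eq_sum] using hT β hβ
    _ ≤ ∑ α ∈ univ.piAntidiag m, Nat.multinomial univ α * ∏ j, A j ^ α j :=
        sum_le_sum fun α _ =>
          le_mul_of_one_le_left (hprod α) (mod_cast Nat.multinomial_pos univ α)
    _ = (∑ j, A j) ^ m := (sum_pow_eq_sum_piAntidiag univ A m).symm

theorem sum_rpow_le_one_of_sum_sqrt_le_one {T : Finset (σ →₀ ℕ)} {m : ℕ}
    (hT : ∀ α ∈ T, α.degree = m) {c : (σ →₀ ℕ) → ℝ} (hc : ∀ α ∈ T, 0 ≤ c α)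
    (h : ∑ j, √(∑ α ∈ T, α j * c α ^ 2) ≤ 1) (hm : 0 < m) :
    ∑ α ∈ T, c α ^ ((2 * m : ℝ) / (m + 1)) ≤ 1 := by
  set A : σ → ℝ := fun j => √(∑ α ∈ T, α j * c α ^ 2)
  have hA (j : σ) : 0 ≤ A j := Real.sqrt_nonneg _
  have hA_sq (j : σ) : ∑ α ∈ T, α j * c α ^ 2 = A j ^ 2 := (Real.sq_sqrt (by positivity)).symm
  have hc_zero {α : σ →₀ ℕ} (hα : α ∈ T) {j : σ} (hj : α j ≠ 0) (hAj : A j = 0) : c α = 0 := by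
    have h0 : ∑ α ∈ T, α j * c α ^ 2 = 0 := by rw [hA_sq, hAj, zero_pow two_ne_zero]
    rw [sum_eq_zero_iff_of_nonneg fun _ _ => by positivity] at h0
    simpa [hj] using h0 α hα
  have pointwise (α : σ →₀ ℕ) (hα : α ∈ T) : c α ^ ((2 * m : ℝ) / (m + 1)) ≤
      (∑ j, α j * (c α ^ 2 / A j) + ∏ j, A j ^ α j) / (m + 1) := by
    by_cases hαA : ∀ j, α j ≠ 0 → A j ≠ 0
    · exact rpow_le_weighted_sum_add_prod hA hαA (hc α hα) (by rw [← α.degree_eq_sum, hT α hα])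
    · push Not at hαA
      obtain ⟨j, hj, hAj⟩ := hαA
      rw [hc_zero hα hj hAj, Real.zero_rpow (by positivity)]
      have := prod_nonneg fun j (_ : j ∈ univ) => pow_nonneg (hA j) (α j)
      positivity
  have sum_weighted : ∑ α ∈ T, ∑ j, α j * (c α ^ 2 / A j) ≤ 1 := by
    refine le_trans (le_of_eq ?_) h
    rw [sum_comm]
    refine sum_congr rfl fun j _ => ?_
    simp_rw [← mul_div_assoc, ← sum_div]
    rw [hA_sq, sq, mul_self_div_self]
  have sum_prod : ∑ α ∈ T, ∏ j, A j ^ α j ≤ 1 :=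
    (sum_prod_pow_le_sum_pow hA hT).trans (pow_le_one₀ (sum_nonneg fun j _ => hA j) h)
  calc ∑ α ∈ T, c α ^ ((2 * m : ℝ) / (m + 1))
      ≤ ∑ α ∈ T, (∑ j, α j * (c α ^ 2 / A j) + ∏ j, A j ^ α j) / (m + 1) := sum_le_sum pointwise
    _ = (∑ α ∈ T, ∑ j, α j * (c α ^ 2 / A j) + ∑ α ∈ T, ∏ j, A j ^ α j) / (m + 1) := by
        rw [← sum_div, sum_add_distrib]
    _ ≤ (1 + 1) / (m + 1) := by gcongr
    _ ≤ 1 := div_le_one_of_le₀ (by gcongr; exact_mod_cast hm) (by positivity)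

theorem sum_rpow_rpow_le_sum_sqrt {T : Finset (σ →₀ ℕ)} {m : ℕ} (hT : ∀ α ∈ T, α.degree = m)
    {c : (σ →₀ ℕ) → ℝ} (hc : ∀ α ∈ T, 0 ≤ c α) (hm : 0 < m) :
    (∑ α ∈ T, c α ^ ((2 * m : ℝ) / (m + 1))) ^ ((m + 1 : ℝ) / (2 * m)) ≤
      ∑ j, √(∑ α ∈ T, α j * c α ^ 2) := by
  refine le_of_forall_gt_imp_ge_of_dense fun S hS => ?_
  have hS0 : 0 < S := (sum_nonneg fun j _ => Real.sqrt_nonneg _).trans_lt hS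
  have normalized : ∑ α ∈ T, (c α / S) ^ ((2 * m : ℝ) / (m + 1)) ≤ 1 := by
    refine sum_rpow_le_one_of_sum_sqrt_le_one hT (fun α hα => div_nonneg (hc α hα) hS0.le) ?_ hm
    simp_rw [div_pow, ← mul_div_assoc, ← sum_div, Real.sqrt_div' _ (sq_nonneg S),
      Real.sqrt_sq hS0.le, ← sum_div]
    exact div_le_one_of_le₀ hS.le hS0.le
  have hsum : ∑ α ∈ T, c α ^ ((2 * m : ℝ) / (m + 1)) ≤ S ^ ((2 * m : ℝ) / (m + 1)) := by
    rwa [sum_congr rfl fun α hα => Real.div_rpow (hc α hα) hS0.le _, ← sum_div,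
      div_le_one (by positivity)] at normalized
  rw [← inv_div (2 * m : ℝ), Real.rpow_inv_le_iff_of_pos
    (sum_nonneg fun α hα => Real.rpow_nonneg (hc α hα) _) hS0.le (by positivity)]
  exact hsum

end AMGM

section CoeffSqNorm

/-- The squared `ℓ²`-norm of the coefficients of a polynomial, which for complex coefficients is its
squared `L²`-norm on the torus. -/
def coeffSqNorm {σ R : Type*} [SeminormedCommRing R] (P : MvPolynomial σ R) : ℝ :=
  ∑ α ∈ P.support, ‖P.coeff α‖ ^ 2

theorem card_antidiagonal_le_two_pow_degree {σ : Type*} [DecidableEq σ] (γ : σ →₀ ℕ) :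
    #(antidiagonal γ) ≤ 2 ^ γ.degree := by
  calc #(antidiagonal γ) ≤ #(Iic γ) :=
        card_le_card_of_injOn Prod.fst
          (fun p hp => by simp [← mem_antidiagonal.mp hp])
          fun p hp q hq h => Prod.ext h <| add_left_cancel (a := p.1) <| by
            rw [mem_antidiagonal.mp hp, h, mem_antidiagonal.mp hq]
    _ = ∏ i ∈ γ.support, (γ i + 1) := by simp [Finsupp.card_Iic]
    _ ≤ ∏ i ∈ γ.support, 2 ^ γ i := prod_le_prod' fun i _ => Nat.lt_two_pow_self
    _ = 2 ^ γ.degree := prod_pow_eq_pow_sum _ _ _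

theorem coeffSqNorm_mul_le {σ R : Type*} [SeminormedCommRing R] (P Q : MvPolynomial σ R) :
    coeffSqNorm (P * Q) ≤ 2 ^ (P * Q).totalDegree * (coeffSqNorm P * coeffSqNorm Q) := by
  classical
  set F : (σ →₀ ℕ) × (σ →₀ ℕ) → ℝ := fun x => ‖P.coeff x.1‖ ^ 2 * ‖Q.coeff x.2‖ ^ 2
  have hcoeff (γ : σ →₀ ℕ) (hγ : γ ∈ (P * Q).support) :
      ‖(P * Q).coeff γ‖ ^ 2 ≤ 2 ^ (P * Q).totalDegree * ∑ x ∈ antidiagonal γ, F x := by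
    have hcard : #(antidiagonal γ) ≤ 2 ^ (P * Q).totalDegree :=
      (card_antidiagonal_le_two_pow_degree γ).trans
        (Nat.pow_le_pow_right two_pos (le_totalDegree hγ))
    calc ‖(P * Q).coeff γ‖ ^ 2
        ≤ (∑ x ∈ antidiagonal γ, ‖P.coeff x.1‖ * ‖Q.coeff x.2‖) ^ 2 := by
          rw [coeff_mul]
          gcongr
          exact (norm_sum_le _ _).trans (sum_le_sum fun x _ => norm_mul_le _ _)
      _ ≤ #(antidiagonal γ) * ∑ x ∈ antidiagonal γ, F x := by
          simp only [F, ← mul_pow]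
          exact sq_sum_le_card_mul_sum_sq
      _ ≤ 2 ^ (P * Q).totalDegree * ∑ x ∈ antidiagonal γ, F x := by
          gcongr
          exact_mod_cast hcard
  have hfiber (γ : σ →₀ ℕ) : ∑ x ∈ antidiagonal γ, F x =
      ∑ x ∈ P.support ×ˢ Q.support with x.1 + x.2 = γ, F x := by
    refine (sum_subset (fun x hx => ?_) fun x hx hx' => ?_).symm
    · simpa using (mem_filter.mp hx).2
    · have : P.coeff x.1 = 0 ∨ Q.coeff x.2 = 0 := by
        simpa [mem_antidiagonal.mp hx, or_iff_not_imp_left] using hx'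
      rcases this with h | h <;> simp [F, h]
  calc coeffSqNorm (P * Q)
      ≤ ∑ γ ∈ (P * Q).support, 2 ^ (P * Q).totalDegree * ∑ x ∈ antidiagonal γ, F x :=
        sum_le_sum hcoeff
    _ ≤ 2 ^ (P * Q).totalDegree * ∑ x ∈ P.support ×ˢ Q.support, F x := by
        rw [← mul_sum]
        simp_rw [hfiber]
        gcongr
        exact sum_fiberwise_le_sum_of_sum_fiber_nonneg fun γ _ => by positivity
    _ = 2 ^ (P * Q).totalDegree * (coeffSqNorm P * coeffSqNorm Q) := by
        rw [coeffSqNorm, coeffSqNorm, sum_mul_sum, sum_product]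

end CoeffSqNorm

theorem expect_sq_pow_three_le {ι : Type*} {s : Finset ι} {f : ι → ℝ} (hf : ∀ i ∈ s, 0 ≤ f i) :
    (𝔼 i ∈ s, f i ^ 2) ^ 3 ≤ (𝔼 i ∈ s, f i) ^ 2 * 𝔼 i ∈ s, f i ^ 4 := by
  have h₂₀ : 0 ≤ 𝔼 i ∈ s, f i ^ 2 := expect_nonneg fun i _ => sq_nonneg _
  have h₂ : (𝔼 i ∈ s, f i ^ 2) ^ 2 ≤ (𝔼 i ∈ s, f i) * 𝔼 i ∈ s, f i ^ 3 := by
    have hf₁ : 𝔼 i ∈ s, √(f i) ^ 2 = 𝔼 i ∈ s, f i :=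
      expect_congr rfl fun i hi => Real.sq_sqrt (hf i hi)
    have hf₂ : 𝔼 i ∈ s, √(f i) * (√(f i) * f i) = 𝔼 i ∈ s, f i ^ 2 :=
      expect_congr rfl fun i hi => by rw [← mul_assoc, Real.mul_self_sqrt (hf i hi), sq]
    have hf₃ : 𝔼 i ∈ s, (√(f i) * f i) ^ 2 = 𝔼 i ∈ s, f i ^ 3 :=
      expect_congr rfl fun i hi => by rw [mul_pow, Real.sq_sqrt (hf i hi), pow_succ' _ 2]
    have := expect_mul_sq_le_sq_mul_sq s (fun i => √(f i)) fun i => √(f i) * f i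
    rwa [hf₁, hf₂, hf₃] at this
  have h₃ : (𝔼 i ∈ s, f i ^ 3) ^ 2 ≤ (𝔼 i ∈ s, f i ^ 2) * 𝔼 i ∈ s, f i ^ 4 := by
    have := expect_mul_sq_le_sq_mul_sq s f fun i => f i ^ 2
    simpa only [← pow_succ', ← pow_mul] using this
  rcases h₂₀.eq_or_lt with h0 | hpos
  · rw [← h0, zero_pow three_ne_zero]
    exact mul_nonneg (sq_nonneg _) (expect_nonneg fun i _ => by positivity)
  refine le_of_mul_le_mul_left ?_ hpos
  calc (𝔼 i ∈ s, f i ^ 2) * (𝔼 i ∈ s, f i ^ 2) ^ 3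
      = ((𝔼 i ∈ s, f i ^ 2) ^ 2) ^ 2 := by ring
    _ ≤ ((𝔼 i ∈ s, f i) * 𝔼 i ∈ s, f i ^ 3) ^ 2 := by gcongr
    _ = (𝔼 i ∈ s, f i) ^ 2 * (𝔼 i ∈ s, f i ^ 3) ^ 2 := mul_pow _ _ _
    _ ≤ (𝔼 i ∈ s, f i) ^ 2 * ((𝔼 i ∈ s, f i ^ 2) * 𝔼 i ∈ s, f i ^ 4) := by gcongr
    _ = (𝔼 i ∈ s, f i ^ 2) * ((𝔼 i ∈ s, f i) ^ 2 * 𝔼 i ∈ s, f i ^ 4) := by ring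

section TorusGrid

/-- The points of `ℂ^σ` whose coordinates are `N`-th roots of unity; averaging over them replaces
integration over the torus for polynomials of degree less than `N` in each variable. -/
noncomputable def torusGrid (σ : Type*) [Fintype σ] [DecidableEq σ] (N : ℕ) : Finset (σ → ℂ) :=
  Fintype.piFinset fun _ => Polynomial.nthRootsFinset N (1 : ℂ)

variable {σ : Type*} [Fintype σ] [DecidableEq σ] {N : ℕ} [NeZero N]

theorem mem_torusGrid {z : σ → ℂ} : z ∈ torusGrid σ N ↔ ∀ i, z i ^ N = 1 := by
  simp [torusGrid, Polynomial.mem_nthRootsFinset (NeZero.pos N)]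

theorem norm_eq_one_of_mem_torusGrid {z : σ → ℂ} (hz : z ∈ torusGrid σ N) (i : σ) : ‖z i‖ = 1 :=
  Complex.norm_eq_one_of_pow_eq_one (mem_torusGrid.mp hz i) (NeZero.ne N)

theorem torusGrid_nonempty : (torusGrid σ N).Nonempty := ⟨1, by simp [mem_torusGrid]⟩

theorem expect_torusGrid_mul_left {w : σ → ℂ} (hw : w ∈ torusGrid σ N) (f : (σ → ℂ) → ℂ) :
    𝔼 z ∈ torusGrid σ N, f (w * z) = 𝔼 z ∈ torusGrid σ N, f z := by
  have hw0 : w * w⁻¹ = 1 := funext fun i =>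
    mul_inv_cancel₀ (norm_ne_zero_iff.mp (by simp [norm_eq_one_of_mem_torusGrid hw i]))
  rw [mem_torusGrid] at hw
  refine expect_nbij' (w * ·) (w⁻¹ * ·) ?_ ?_ ?_ ?_ fun _ _ => rfl <;>
    intro z hz
  · simp [mem_torusGrid, mul_pow, hw, mem_torusGrid.mp hz]
  · simp [mem_torusGrid, mul_pow, hw, mem_torusGrid.mp hz]
  · rw [← mul_assoc, mul_comm w⁻¹, hw0, one_mul]
  · rw [← mul_assoc, hw0, one_mul]

theorem expect_torusGrid_monomial_mul_conj {α β : σ →₀ ℕ} (hα : ∀ i, α i < N) (hβ : ∀ i, β i < N) :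
    𝔼 z ∈ torusGrid σ N, (∏ i, z i ^ α i) * conj (∏ i, z i ^ β i) = if α = β then 1 else 0 := by
  set χ : (σ → ℂ) → ℂ := fun z => (∏ i, z i ^ α i) * conj (∏ i, z i ^ β i)
  split_ifs with hαβ
  · refine (expect_congr rfl fun z hz => ?_).trans (expect_const torusGrid_nonempty 1)
    simp only [hαβ, Complex.mul_conj', norm_prod, norm_pow, norm_eq_one_of_mem_torusGrid hz,
      one_pow, prod_const_one, Complex.ofReal_one]
  obtain ⟨i, hi⟩ := DFunLike.ne_iff.mp hαβ
  have hω := Complex.isPrimitiveRoot_exp N (NeZero.ne N)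
  set ω := Complex.exp (2 * Real.pi * Complex.I / N)
  set w : σ → ℂ := Pi.mulSingle i ω
  have hw : w ∈ torusGrid σ N := mem_torusGrid.mpr fun j => by
    rw [← Pi.pow_apply, ← Pi.mulSingle_pow, hω.pow_eq_one, Pi.mulSingle_one, Pi.one_apply]
  have hw_prod (γ : σ →₀ ℕ) : ∏ j, w j ^ γ j = ω ^ γ i := by
    rw [Fintype.prod_eq_single i fun j hj => by simp [w, Pi.mulSingle_eq_of_ne hj]]
    simp [w]
  have hχ_mul (z : σ → ℂ) : χ (w * z) = ω ^ α i * conj (ω ^ β i) * χ z := by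
    simp only [χ, Pi.mul_apply, mul_pow, prod_mul_distrib, hw_prod, map_mul]
    ring
  have hχ_w : ω ^ α i * conj (ω ^ β i) ≠ 1 := by
    rw [← Complex.inv_eq_conj (by simp [hω.norm'_eq_one (NeZero.ne N)]),
      Ne, mul_inv_eq_one₀ (pow_ne_zero _ (hω.ne_zero (NeZero.ne N)))]
    exact fun h => hi (hω.pow_inj (hα i) (hβ i) h)
  have hinv := expect_torusGrid_mul_left hw χ
  simp_rw [hχ_mul, ← mul_expect] at hinv
  exact by_contra fun h => hχ_w ((mul_eq_right₀ h).mp hinv)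

theorem expect_torusGrid_norm_eval_sq {P : MvPolynomial σ ℂ} (hP : ∀ i, P.degreeOf i < N) :
    𝔼 z ∈ torusGrid σ N, ‖eval z P‖ ^ 2 = coeffSqNorm P := by
  have hlt {α : σ →₀ ℕ} (hα : α ∈ P.support) (i : σ) : α i < N :=
    (monomial_le_degreeOf i hα).trans_lt (hP i)
  have hexpand (z : σ → ℂ) : eval z P * conj (eval z P) =
      ∑ α ∈ P.support, ∑ β ∈ P.support, P.coeff α * conj (P.coeff β) *
        ((∏ i, z i ^ α i) * conj (∏ i, z i ^ β i)) := by
    simp only [eval_eq', map_sum, map_mul, sum_mul_sum, mul_mul_mul_comm]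
  apply Complex.ofReal_injective
  calc ((𝔼 z ∈ torusGrid σ N, ‖eval z P‖ ^ 2 : ℝ) : ℂ)
      = 𝔼 z ∈ torusGrid σ N, eval z P * conj (eval z P) := by
        simp [← Complex.mul_conj']
    _ = ∑ α ∈ P.support, ∑ β ∈ P.support, P.coeff α * conj (P.coeff β) *
          𝔼 z ∈ torusGrid σ N, (∏ i, z i ^ α i) * conj (∏ i, z i ^ β i) := by
        simp_rw [hexpand, expect_sum_comm, ← mul_expect]
    _ = ∑ α ∈ P.support, P.coeff α * conj (P.coeff α) := by
        refine sum_congr rfl fun α hα => ?_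
        rw [sum_congr rfl fun β hβ => by rw [expect_torusGrid_monomial_mul_conj (hlt hα) (hlt hβ)]]
        simp [hα]
    _ = (coeffSqNorm P : ℂ) := by
        simp [coeffSqNorm, Complex.mul_conj']

theorem sqrt_coeffSqNorm_le_two_pow_mul_expect {P : MvPolynomial σ ℂ} {m : ℕ}
    (hP : P.totalDegree ≤ m) (hN : 2 * m < N) :
    √(coeffSqNorm P) ≤ 2 ^ m * 𝔼 z ∈ torusGrid σ N, ‖eval z P‖ := by
  have hPP : (P * P).totalDegree ≤ 2 * m := by have := totalDegree_mul P P; omega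
  have hS0 : 0 ≤ coeffSqNorm P := sum_nonneg fun _ _ => sq_nonneg _
  have second_moment : 𝔼 z ∈ torusGrid σ N, ‖eval z P‖ ^ 2 = coeffSqNorm P :=
    expect_torusGrid_norm_eval_sq fun i => by have := P.degreeOf_le_totalDegree i; omega
  have fourth_moment : 𝔼 z ∈ torusGrid σ N, ‖eval z P‖ ^ 4 ≤ 2 ^ (2 * m) * coeffSqNorm P ^ 2 := by
    calc 𝔼 z ∈ torusGrid σ N, ‖eval z P‖ ^ 4
        = 𝔼 z ∈ torusGrid σ N, ‖eval z (P * P)‖ ^ 2 := by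
          refine expect_congr rfl fun z _ => ?_
          rw [map_mul, norm_mul, ← sq, ← pow_mul]
      _ = coeffSqNorm (P * P) :=
          expect_torusGrid_norm_eval_sq fun i => by have := (P * P).degreeOf_le_totalDegree i; omega
      _ ≤ 2 ^ (P * P).totalDegree * (coeffSqNorm P * coeffSqNorm P) := coeffSqNorm_mul_le P P
      _ ≤ 2 ^ (2 * m) * coeffSqNorm P ^ 2 := by
          rw [sq (coeffSqNorm P)]
          gcongr
          exact one_le_two
  have holder := (expect_sq_pow_three_le fun z (_ : z ∈ torusGrid σ N) =>
    norm_nonneg (eval z P)).trans (mul_le_mul_of_nonneg_left fourth_moment (sq_nonneg _))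
  rw [second_moment] at holder
  rw [Real.sqrt_le_left (by positivity)]
  rcases hS0.eq_or_lt with h0 | hpos
  · rw [← h0]
    positivity
  refine le_of_mul_le_mul_left ?_ (pow_pos hpos 2)
  calc coeffSqNorm P ^ 2 * coeffSqNorm P = coeffSqNorm P ^ 3 := (pow_succ _ _).symm
    _ ≤ _ := holder
    _ = coeffSqNorm P ^ 2 * (2 ^ m * 𝔼 z ∈ torusGrid σ N, ‖eval z P‖) ^ 2 := by ring

end TorusGrid

section XMulPDeriv

theorem coeff_X_mul_pderiv {σ R : Type*} [CommSemiring R] (j : σ) (P : MvPolynomial σ R)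
    (α : σ →₀ ℕ) : (X j * pderiv j P).coeff α = α j * P.coeff α := by
  classical
  induction P using MvPolynomial.induction_on' with
  | monomial β r =>
    rw [X_mul_pderiv_monomial, coeff_smul, coeff_monomial, nsmul_eq_mul]
    split_ifs with h
    · rw [h]
    · rw [mul_zero, mul_zero]
  | add P Q hP hQ => rw [map_add, mul_add, coeff_add, coeff_add, hP, hQ, mul_add]

theorem support_X_mul_pderiv_subset {σ R : Type*} [CommSemiring R] (j : σ)
    (P : MvPolynomial σ R) : (X j * pderiv j P).support ⊆ P.support := fun α hα => by
  rw [mem_support_iff, coeff_X_mul_pderiv] at hα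
  exact mem_support_iff.mpr (right_ne_zero_of_mul hα)

theorem totalDegree_X_mul_pderiv_le {σ R : Type*} [CommSemiring R] (j : σ)
    (P : MvPolynomial σ R) : (X j * pderiv j P).totalDegree ≤ P.totalDegree :=
  sup_mono (support_X_mul_pderiv_subset j P)

theorem coeffSqNorm_X_mul_pderiv {σ 𝕜 : Type*} [RCLike 𝕜] (j : σ) (P : MvPolynomial σ 𝕜) :
    coeffSqNorm (X j * pderiv j P) = ∑ α ∈ P.support, (α j * ‖P.coeff α‖) ^ 2 := by
  have hnorm (α : σ →₀ ℕ) : ‖(X j * pderiv j P).coeff α‖ = α j * ‖P.coeff α‖ := by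
    rw [coeff_X_mul_pderiv, norm_mul, RCLike.norm_natCast]
  simp_rw [coeffSqNorm, hnorm]
  refine sum_subset (support_X_mul_pderiv_subset j P) fun α _ hα => ?_
  rw [← hnorm, notMem_support_iff.mp hα, norm_zero, zero_pow two_ne_zero]

variable {σ : Type*} [Fintype σ]

theorem hasDerivAt_mvPolynomial_eval {𝕜 : Type*} [NontriviallyNormedField 𝕜]
    (P : MvPolynomial σ 𝕜) {g : 𝕜 → σ → 𝕜} {g' : σ → 𝕜} {t : 𝕜} (hg : HasDerivAt g g' t) :
    HasDerivAt (fun s => eval (g s) P) (∑ i, eval (g t) (pderiv i P) * g' i) t := by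
  classical
  induction P using MvPolynomial.induction_on with
  | C a => simpa using hasDerivAt_const t a
  | add P Q hP hQ => simpa [add_mul, sum_add_distrib] using hP.fun_add hQ
  | mul_X P j hP =>
    have := hP.fun_mul (hasDerivAt_pi.mp hg j)
    simp only [Derivation.leibniz, pderiv_X, smul_eq_mul, map_add, map_mul, eval_X, add_mul,
      sum_add_distrib]
    refine this.congr_deriv ?_
    rw [add_comm, sum_mul]
    congr 1
    · simp [Pi.single_apply]
    · exact sum_congr rfl fun i _ => by ring

theorem sum_norm_eval_X_mul_pderiv_le {P : MvPolynomial σ ℂ} {z : σ → ℂ} {M : ℝ}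
    (hM : ∀ w : σ → ℂ, (∀ i, ‖w i‖ ≤ 2 * ‖z i‖) → ‖eval w P‖ ≤ M) :
    ∑ j, ‖eval z (X j * pderiv j P)‖ ≤ M := by
  choose u hu_norm hu using fun j => Complex.exists_norm_eq_mul_self (eval z (X j * pderiv j P))
  set g : ℂ → σ → ℂ := fun ζ i => z i * (1 + ζ * u i)
  have hg (ζ : ℂ) : HasDerivAt g (fun i => z i * u i) ζ := hasDerivAt_pi.mpr fun i => by
    simpa using (((hasDerivAt_id ζ).mul_const (u i)).const_add 1).const_mul (z i)
  have hderiv : deriv (fun ζ => eval (g ζ) P) 0 =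
      ((∑ j, ‖eval z (X j * pderiv j P)‖ : ℝ) : ℂ) := by
    rw [(hasDerivAt_mvPolynomial_eval P (hg 0)).deriv, Complex.ofReal_sum]
    refine sum_congr rfl fun j _ => ?_
    have hg0 : g 0 = z := funext fun i => by simp [g]
    rw [hu, hg0, map_mul, eval_X]
    ring
  have hdiff : Differentiable ℂ fun ζ => eval (g ζ) P := fun ζ =>
    (hasDerivAt_mvPolynomial_eval P (hg ζ)).differentiableAt
  have cauchy := Complex.norm_deriv_le_of_forall_mem_sphere_norm_le (c := 0)
    one_pos hdiff.diffContOnCl fun ζ hζ => hM (g ζ) fun i => by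
      have hζ : ‖ζ‖ = 1 := by simpa using hζ
      calc ‖z i * (1 + ζ * u i)‖ ≤ ‖z i‖ * (‖(1 : ℂ)‖ + ‖ζ * u i‖) := by
            rw [norm_mul]
            gcongr
            exact norm_add_le _ _
        _ = 2 * ‖z i‖ := by
            rw [norm_one, norm_mul, hζ, hu_norm]
            ring
  rw [hderiv, Complex.norm_real, div_one] at cauchy
  exact (le_abs_self _).trans cauchy

end XMulPDeriv

section Homogeneous

theorem degree_eq_of_isHomogeneous {σ R : Type*} [CommSemiring R] {P : MvPolynomial σ R} {m : ℕ}
    (hP : P.IsHomogeneous m) {α : σ →₀ ℕ} (hα : α ∈ P.support) : α.degree = m :=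
  (hP.degree_eq_sum_deg_support hα).symm

theorem eval_smul_of_isHomogeneous {σ R : Type*} [CommSemiring R] {P : MvPolynomial σ R} {m : ℕ}
    (hP : P.IsHomogeneous m) (c : R) (z : σ → R) : eval (c • z) P = c ^ m * eval z P := by
  simp only [eval_eq, mul_sum]
  refine sum_congr rfl fun α hα => ?_
  simp only [Pi.smul_apply, smul_eq_mul, mul_pow, prod_mul_distrib, prod_pow_eq_pow_sum,
    hP.degree_eq_sum_deg_support hα]
  ring

theorem norm_eval_le_pow_mul_of_isHomogeneous {σ 𝕜 : Type*} [RCLike 𝕜] {P : MvPolynomial σ 𝕜}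
    {m : ℕ} (hP : P.IsHomogeneous m) {M : ℝ}
    (hM : ∀ z : σ → 𝕜, (∀ i, ‖z i‖ < 1) → ‖eval z P‖ ≤ M) {r : ℝ} (hr : 0 < r) {z : σ → 𝕜}
    (hz : ∀ i, ‖z i‖ < r) : ‖eval z P‖ ≤ r ^ m * M := by
  have hscale : (r : 𝕜) • (r : 𝕜)⁻¹ • z = z := smul_inv_smul₀ (mod_cast hr.ne') z
  rw [← hscale, eval_smul_of_isHomogeneous hP, norm_mul, norm_pow, RCLike.norm_of_nonneg hr.le]
  gcongr
  refine hM _ fun i => ?_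
  rw [Pi.smul_apply, norm_smul, norm_inv, RCLike.norm_of_nonneg hr.le, inv_mul_lt_iff₀ hr, mul_one]
  exact hz i

end Homogeneous

section BohnenblustHille

theorem sum_sqrt_sum_coeff_le_six_pow_mul {σ : Type*} [Fintype σ] {P : MvPolynomial σ ℂ} {m : ℕ}
    (hP : P.IsHomogeneous m) {M : ℝ}
    (hM : ∀ z : σ → ℂ, (∀ i, ‖z i‖ < 1) → ‖eval z P‖ ≤ M) :
    ∑ j, √(∑ α ∈ P.support, α j * ‖P.coeff α‖ ^ 2) ≤ 6 ^ m * M := by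
  classical
  set G := torusGrid σ (2 * m + 1)
  have sqrt_le (j : σ) : √(∑ α ∈ P.support, α j * ‖P.coeff α‖ ^ 2) ≤
      2 ^ m * 𝔼 z ∈ G, ‖eval z (X j * pderiv j P)‖ := by
    refine le_trans (Real.sqrt_le_sqrt ?_) <| sqrt_coeffSqNorm_le_two_pow_mul_expect
      ((totalDegree_X_mul_pderiv_le j P).trans hP.totalDegree_le) (Nat.lt_succ_self _)
    rw [coeffSqNorm_X_mul_pderiv]
    simp_rw [mul_pow]
    gcongr with α
    exact_mod_cast Nat.le_self_pow two_ne_zero (α j)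
  have grid_le (z : σ → ℂ) (hz : z ∈ G) : ∑ j, ‖eval z (X j * pderiv j P)‖ ≤ 3 ^ m * M :=
    sum_norm_eval_X_mul_pderiv_le fun w hw =>
      norm_eval_le_pow_mul_of_isHomogeneous hP hM three_pos fun i =>
        (hw i).trans_lt (by rw [norm_eq_one_of_mem_torusGrid hz]; norm_num)
  calc ∑ j, √(∑ α ∈ P.support, α j * ‖P.coeff α‖ ^ 2)
      ≤ ∑ j, 2 ^ m * 𝔼 z ∈ G, ‖eval z (X j * pderiv j P)‖ := sum_le_sum fun j _ => sqrt_le j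
    _ = 2 ^ m * 𝔼 z ∈ G, ∑ j, ‖eval z (X j * pderiv j P)‖ := by
        rw [← mul_sum, expect_sum_comm]
    _ ≤ 2 ^ m * (3 ^ m * M) := by
        gcongr
        exact expect_le torusGrid_nonempty grid_le
    _ = 6 ^ m * M := by
        rw [← mul_assoc, ← mul_pow]
        norm_num

theorem bohnenblust_hille_hypercontractive_general {σ : Type*} {P : MvPolynomial σ ℂ} {m : ℕ}
    (hP : P.IsHomogeneous m) (hm : 0 < m) {M : ℝ}
    (hM : ∀ z : σ → ℂ, (∀ i, ‖z i‖ < 1) → ‖eval z P‖ ≤ M) :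
    (∑ α ∈ P.support, ‖P.coeff α‖ ^ ((2 * m : ℝ) / (m + 1))) ^ ((m + 1 : ℝ) / (2 * m)) ≤
      6 ^ m * M := by
  classical
  obtain ⟨n, f, hf, Q, rfl⟩ := exists_fin_rename P
  rw [support_rename_of_injective hf, sum_image (Finsupp.mapDomain_injective hf).injOn]
  simp_rw [coeff_rename_mapDomain f hf]
  have hQ : Q.IsHomogeneous m := (IsHomogeneous.rename_isHomogeneous_iff hf).mp hP
  have hQM (z : Fin n → ℂ) (hz : ∀ k, ‖z k‖ < 1) : ‖eval z Q‖ ≤ M := by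
    rw [← Function.extend_comp hf z 0, ← eval_rename]
    refine hM _ fun i => ?_
    by_cases hi : ∃ k, f k = i
    · obtain ⟨k, rfl⟩ := hi
      rw [hf.extend_apply]
      exact hz k
    · simp [Function.extend_apply' _ _ _ hi]
  exact (sum_rpow_rpow_le_sum_sqrt (fun α hα => degree_eq_of_isHomogeneous hQ hα)
    (fun _ _ => norm_nonneg _) hm).trans (sum_sqrt_sum_coeff_le_six_pow_mul hQ hQM)

end BohnenblustHille

/-- The polynomial in `MvPolynomial (Fin n) ℂ` whose evaluation is `mhEval n m a`; values of `a`
at multi-indices of degree other than `m` are ignored. -/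
noncomputable def mhPolynomial (n m : ℕ) (a : (Fin n → ℕ) → ℂ) : MvPolynomial (Fin n) ℂ :=
  ∑ α ∈ Nat.antidiagonalTuple n m, monomial (Finsupp.equivFunOnFinite.symm α) (a α)

namespace mhPolynomial

variable {n m : ℕ} {a : (Fin n → ℕ) → ℂ}

theorem eval_eq_mhEval (z : Fin n → ℂ) : eval z (mhPolynomial n m a) = mhEval n m a z := by
  simp [mhPolynomial, mhEval, eval_monomial, Finsupp.prod_fintype]

theorem isHomogeneous : (mhPolynomial n m a).IsHomogeneous m :=
  IsHomogeneous.sum _ _ _ fun α hα => isHomogeneous_monomial _ <| by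
    simpa [Finsupp.degree_eq_sum] using Nat.mem_antidiagonalTuple.mp hα

theorem coeff_eq (α : Fin n →₀ ℕ) :
    (mhPolynomial n m a).coeff α = if α.degree = m then a α else 0 := by
  classical
  simp only [mhPolynomial, coeff_sum, coeff_monomial, Equiv.symm_apply_eq, sum_ite_eq',
    Nat.mem_antidiagonalTuple, Finsupp.degree_eq_sum]
  rfl

theorem sum_support_norm_coeff_rpow {p : ℝ} (hp : p ≠ 0) :
    ∑ α ∈ (mhPolynomial n m a).support, ‖(mhPolynomial n m a).coeff α‖ ^ p =
      ∑ α ∈ Nat.antidiagonalTuple n m, ‖a α‖ ^ p := by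
  refine sum_of_injOn (⇑) DFunLike.coe_injective.injOn (fun α hα => ?_) (fun α hα hα' => ?_)
    fun α hα => ?_
  · rw [SetLike.mem_coe, Nat.mem_antidiagonalTuple, ← Finsupp.degree_eq_sum]
    exact degree_eq_of_isHomogeneous isHomogeneous hα
  · have hcoeff : (mhPolynomial n m a).coeff (Finsupp.equivFunOnFinite.symm α) = 0 :=
      notMem_support_iff.mp fun h => hα' ⟨_, h, rfl⟩
    rw [coeff_eq, Finsupp.degree_eq_sum, Finsupp.coe_equivFunOnFinite_symm,
      if_pos (Nat.mem_antidiagonalTuple.mp hα)] at hcoeff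
    rw [hcoeff, norm_zero, Real.zero_rpow hp]
  · rw [coeff_eq, if_pos (degree_eq_of_isHomogeneous isHomogeneous hα)]

end mhPolynomial

theorem norm_mhEval_le_polydiscSup {n m : ℕ} {a : (Fin n → ℕ) → ℂ} {z : Fin n → ℂ}
    (hz : ∀ i, ‖z i‖ < 1) : ‖mhEval n m a z‖ ≤ polydiscSup n m a := by
  refine le_csSup ⟨∑ α ∈ Nat.antidiagonalTuple n m, ‖a α‖, ?_⟩ ⟨z, hz, rfl⟩
  rintro _ ⟨w, hw, rfl⟩
  refine (norm_sum_le _ _).trans (sum_le_sum fun α _ => ?_)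
  rw [norm_mul, norm_prod]
  refine mul_le_of_le_one_right (norm_nonneg _) <|
    prod_le_one (fun _ _ => norm_nonneg _) fun i _ => ?_
  rw [norm_pow]
  exact pow_le_one₀ (norm_nonneg _) (hw i).le

end

/-- Hypercontractive Bohnenblust–Hille inequality for `m`-homogeneous polynomials. -/
theorem bohnenblust_hille_hypercontractive :
    ∃ C : ℝ, 1 ≤ C ∧ ∀ (m n : ℕ), 0 < m → 0 < n → ∀ a : (Fin n → ℕ) → ℂ,
      (∑ α ∈ Finset.Nat.antidiagonalTuple n m,
          ‖a α‖ ^ ((2 * (m : ℝ)) / ((m : ℝ) + 1))) ^ (((m : ℝ) + 1) / (2 * (m : ℝ)))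
        ≤ C ^ m * polydiscSup n m a := by
  refine ⟨6, by norm_num, fun m n hm _ a => ?_⟩
  rw [← mhPolynomial.sum_support_norm_coeff_rpow (by positivity)]
  exact bohnenblust_hille_hypercontractive_general mhPolynomial.isHomogeneous hm fun z hz =>
    mhPolynomial.eval_eq_mhEval z ▸ norm_mhEval_le_polydiscSup hz
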